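/- arXiv:1706.04066 — 2 statements merged into one kernel-verified Lean document; each statement's English description precedes it below -/
import Mathlib

section
/- Let ν > 0, r ∈ [0,1], and set ν₀ = min(ν, 1/2). Then for every z > 0 it holds z^{ν+r} K_ν(z) ≤ (ν + r − ν₀)^r · 2^{ν−1} Γ(ν). -/
/-- The modified Bessel function of the second kind,
`K_ν(z) = ∫₀^∞ exp(−z cosh t) cosh(ν t) dt`. -/
noncomputable def besselK (ν z : ℝ) : ℝ :=
  ∫ t in Set.Ioi (0:ℝ), Real.exp (-z * Real.cosh t) * Real.cosh (ν * t)

/-!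
Let `c = ν + r - min ν (1/2)`. Replacing `cosh t` by `exp t / 2` in
`2 K_ν(z) = ∫ exp (ν t - z cosh t) dt` (over `ℝ`) gives a Gamma integral, hence
`z ^ ν * K_ν(z) ≤ 2 ^ (ν - 1) * Γ(ν)`; this settles `z ≤ c`. For `z ≥ c`, the function
`z ^ (ν + r) * K_ν(z)` is decreasing because `-z K_ν'(z) ≥ (min ν (1/2) + z) K_ν(z)`. The
recurrences `-2 K_ν' = K_{ν+1} + K_{ν-1}` and `2 ν K_ν = z (K_{ν+1} - K_{ν-1})` reduce the last
inequality to the comparison of integrands `min ν (1/2) * tanh (ν t) ≤ ν * tanh (t / 2)`, which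
expresses the monotonicity of `tanh` for `ν ≤ 1/2` and its concavity on `[0, ∞)` for `ν ≥ 1/2`.
-/

open Real Set MeasureTheory

section Hyperbolic

lemma sinh_mul_mul_cosh_le {c x : ℝ} (hc : 1 ≤ c) (hx : 0 ≤ x) :
    sinh (c * x) * cosh x ≤ c * (sinh x * cosh (c * x)) := by
  let g : ℝ → ℝ := fun y ↦ c * (sinh y * cosh (c * y)) - sinh (c * y) * cosh y
  have hg (y : ℝ) : HasDerivAt g ((c ^ 2 - 1) * (sinh y * sinh (c * y))) y := by
    have hlin : HasDerivAt (fun y ↦ c * y) c y := by simpa using (hasDerivAt_id y).const_mul c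
    refine ((((hasDerivAt_sinh y).fun_mul hlin.cosh).const_mul c).fun_sub
      (hlin.sinh.fun_mul (hasDerivAt_cosh y))).congr_deriv ?_
    ring
  have hmono : MonotoneOn g (Ici 0) := by
    refine monotoneOn_of_hasDerivWithinAt_nonneg (convex_Ici 0)
      (fun y _ ↦ (hg y).continuousAt.continuousWithinAt) (fun y _ ↦ (hg y).hasDerivWithinAt) ?_
    intro y hy
    have hy : 0 ≤ y := interior_subset hy
    have : 0 ≤ sinh y := sinh_nonneg_iff.2 hy
    have : 0 ≤ sinh (c * y) := sinh_nonneg_iff.2 (by positivity)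
    have : 0 ≤ c ^ 2 - 1 := by nlinarith
    positivity
  simpa [g] using hmono self_mem_Ici hx hx

lemma min_one_mul_sinh_mul_mul_cosh_le {c x : ℝ} (hc : 0 ≤ c) (hx : 0 ≤ x) :
    min c 1 * (sinh (c * x) * cosh x) ≤ c * (sinh x * cosh (c * x)) := by
  rcases le_total c 1 with h | h
  · have hsub : 0 ≤ sinh (x - c * x) := sinh_nonneg_iff.2 (by nlinarith)
    rw [sinh_sub] at hsub
    rw [min_eq_left h]
    exact mul_le_mul_of_nonneg_left (by linarith) hc
  · rw [min_eq_right h, one_mul]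
    exact sinh_mul_mul_cosh_le h hx

lemma two_mul_cosh_mul_le {ν t : ℝ} (hν : 0 ≤ ν) (ht : 0 ≤ t) :
    2 * ν * cosh (ν * t) ≤ (ν - min ν (1 / 2)) * cosh ((ν + 1) * t) +
      (ν + min ν (1 / 2)) * cosh ((ν - 1) * t) := by
  obtain ⟨x, rfl⟩ : ∃ x, t = 2 * x := ⟨t / 2, by ring⟩
  have hx : 0 ≤ x := by linarith
  have hmin : min (2 * ν) 1 = 2 * min ν (1 / 2) := by
    rw [mul_min_of_nonneg _ _ zero_le_two, mul_one_div_cancel two_ne_zero]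
  have htanh := min_one_mul_sinh_mul_mul_cosh_le (c := 2 * ν) (by positivity) hx
  rw [hmin, show 2 * ν * x = ν * (2 * x) by ring] at htanh
  have hcosh : cosh (2 * x) = 2 * sinh x ^ 2 + 1 := by rw [cosh_two_mul, cosh_sq]; ring
  rw [add_one_mul ν, sub_one_mul ν, cosh_add, cosh_sub, hcosh, sinh_two_mul]
  linarith [mul_le_mul_of_nonneg_left htanh (sinh_nonneg_iff.2 hx)]

end Hyperbolic

section ExpSubstitution

variable {E : Type*} [NormedAddCommGroup E] [NormedSpace ℝ E]

lemma integral_comp_exp (g : ℝ → E) : ∫ t, exp t • g (exp t) = ∫ x in Ioi 0, g x := by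
  rw [← range_exp, ← image_univ]
  simpa [abs_of_pos (exp_pos _)] using (integral_image_eq_integral_abs_deriv_smul
    MeasurableSet.univ (fun t _ ↦ (hasDerivAt_exp t).hasDerivWithinAt) exp_injective.injOn g).symm

lemma integrable_comp_exp (g : ℝ → E) :
    Integrable (fun t ↦ exp t • g (exp t)) ↔ IntegrableOn g (Ioi 0) := by
  rw [← range_exp, ← image_univ]
  simpa [abs_of_pos (exp_pos _)] using (integrableOn_image_iff_integrableOn_abs_deriv_smul
    MeasurableSet.univ (fun t _ ↦ (hasDerivAt_exp t).hasDerivWithinAt) exp_injective.injOn g).symm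

lemma exp_smul_rpow_mul_exp (ν b t : ℝ) :
    exp t • (exp t ^ (ν - 1) * exp (-(b * exp t))) = exp (ν * t - b * exp t) := by
  rw [← exp_mul, smul_eq_mul, ← exp_add, ← exp_add]
  ring_nf

lemma integrable_exp_sub_mul_exp {ν b : ℝ} (hν : 0 < ν) (hb : 0 < b) :
    Integrable fun t ↦ exp (ν * t - b * exp t) := by
  have hgamma : IntegrableOn (fun x ↦ x ^ (ν - 1) * exp (-(b * x))) (Ioi 0) := by
    simpa [neg_mul] using integrableOn_rpow_mul_exp_neg_mul_rpow (p := 1) (s := ν - 1)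
      (by linarith) one_pos hb
  simpa only [exp_smul_rpow_mul_exp] using (integrable_comp_exp _).2 hgamma

lemma integral_exp_sub_mul_exp {ν b : ℝ} (hν : 0 < ν) (hb : 0 < b) :
    ∫ t, exp (ν * t - b * exp t) = (1 / b) ^ ν * Gamma ν := by
  rw [← integral_rpow_mul_exp_neg_mul_Ioi hν hb, ← integral_comp_exp]
  simp only [exp_smul_rpow_mul_exp]

end ExpSubstitution

section BesselK

variable {ν z : ℝ}

lemma sub_mul_cosh_le_sub_mul_exp (hz : 0 ≤ z) (ν t : ℝ) :
    ν * t - z * cosh t ≤ ν * t - z / 2 * exp t := by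
  have hcosh : exp t / 2 ≤ cosh t := by rw [cosh_eq]; linarith [exp_pos (-t)]
  linarith [mul_le_mul_of_nonneg_left hcosh hz]

lemma integrable_exp_sub_mul_cosh (ν : ℝ) (hz : 0 < z) :
    Integrable fun t ↦ exp (ν * t - z * cosh t) := by
  have hpos {μ : ℝ} (hμ : 0 < μ) : Integrable fun t ↦ exp (μ * t - z * cosh t) := by
    refine (integrable_exp_sub_mul_exp hμ (half_pos hz)).mono' (by fun_prop) (.of_forall fun t ↦ ?_)
    rw [norm_of_nonneg (exp_nonneg _)]
    exact exp_le_exp.2 (sub_mul_cosh_le_sub_mul_exp hz.le μ t)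
  have hμ : 0 < |ν| + 1 := by positivity
  refine ((hpos hμ).add (hpos hμ).comp_neg).mono' (by fun_prop) (.of_forall fun t ↦ ?_)
  have hνt : ν * t ≤ (|ν| + 1) * |t| :=
    (le_abs_self _).trans (by rw [abs_mul]; gcongr; linarith)
  rw [norm_of_nonneg (exp_nonneg _)]
  rcases abs_choice t with ht | ht <;> rw [ht] at hνt
  · exact le_add_of_le_of_nonneg (exp_le_exp.2 (by linarith)) (exp_nonneg _)
  · exact le_add_of_nonneg_of_le (exp_nonneg _) (exp_le_exp.2 (by rw [cosh_neg]; linarith))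

lemma exp_neg_mul_cosh_mul_cosh (ν z t : ℝ) :
    exp (-z * cosh t) * cosh (ν * t) =
      (exp (ν * t - z * cosh t) + exp (ν * -t - z * cosh (-t))) / 2 := by
  rw [cosh_neg, cosh_eq (ν * t), sub_eq_add_neg, sub_eq_add_neg, exp_add, exp_add]
  ring_nf

lemma integrableOn_exp_neg_mul_cosh_mul_cosh (ν : ℝ) (hz : 0 < z) :
    IntegrableOn (fun t ↦ exp (-z * cosh t) * cosh (ν * t)) (Ioi 0) := by
  have h := integrable_exp_sub_mul_cosh ν hz
  simp only [exp_neg_mul_cosh_mul_cosh]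
  exact ((h.add h.comp_neg).div_const 2).integrableOn

lemma integral_exp_sub_mul_cosh (ν : ℝ) (hz : 0 < z) :
    ∫ t, exp (ν * t - z * cosh t) = 2 * besselK ν z := by
  have h := integrable_exp_sub_mul_cosh ν hz
  have heven (t : ℝ) : exp (-z * cosh |t|) * cosh (ν * |t|) = exp (-z * cosh t) * cosh (ν * t) := by
    rcases abs_choice t with ht | ht <;> simp [ht]
  rw [besselK, ← integral_comp_abs (f := fun t ↦ exp (-z * cosh t) * cosh (ν * t))]
  simp only [heven, exp_neg_mul_cosh_mul_cosh]
  rw [integral_div, integral_add h h.comp_neg,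
    integral_neg_eq_self (fun t ↦ exp (ν * t - z * cosh t)) volume]
  ring

lemma besselK_nonneg (ν z : ℝ) : 0 ≤ besselK ν z :=
  setIntegral_nonneg measurableSet_Ioi fun _ _ ↦ by positivity

lemma mul_besselK_add_one_sub_besselK_sub_one (ν : ℝ) (hz : 0 < z) :
    z * (besselK (ν + 1) z - besselK (ν - 1) z) = 2 * ν * besselK ν z := by
  have hint (μ : ℝ) := integrable_exp_sub_mul_cosh μ hz
  have hderiv (t : ℝ) : HasDerivAt (fun t ↦ exp (ν * t - z * cosh t))
      (ν * exp (ν * t - z * cosh t) - z / 2 *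
        (exp ((ν + 1) * t - z * cosh t) - exp ((ν - 1) * t - z * cosh t))) t := by
    refine (((hasDerivAt_id' t).const_mul ν).fun_sub
      ((hasDerivAt_cosh t).const_mul z)).exp.congr_deriv ?_
    rw [show (ν + 1) * t - z * cosh t = ν * t - z * cosh t + t by ring,
      show (ν - 1) * t - z * cosh t = ν * t - z * cosh t + -t by ring, exp_add, exp_add, sinh_eq]
    ring
  have hdiff := (hint (ν + 1)).sub' (hint (ν - 1))
  have hzero := integral_eq_zero_of_hasDerivAt_of_integrable hderiv
    (((hint ν).const_mul ν).sub' (hdiff.const_mul (z / 2))) (hint ν)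
  rw [integral_sub ((hint ν).const_mul ν) (hdiff.const_mul (z / 2)), integral_const_mul,
    integral_const_mul, integral_sub (hint _) (hint _)] at hzero
  simp only [integral_exp_sub_mul_cosh _ hz] at hzero
  linarith

lemma exp_neg_mul_cosh_mul_cosh_mul_cosh (ν z t : ℝ) :
    exp (-z * cosh t) * (cosh t * cosh (ν * t)) = (exp (-z * cosh t) * cosh ((ν + 1) * t) +
      exp (-z * cosh t) * cosh ((ν - 1) * t)) / 2 := by
  rw [add_one_mul ν, sub_one_mul ν, cosh_add, cosh_sub]
  ring

lemma hasDerivAt_besselK (ν : ℝ) (hz : 0 < z) :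
    HasDerivAt (besselK ν) (-((besselK (ν + 1) z + besselK (ν - 1) z) / 2)) z := by
  have hint (μ : ℝ) := integrableOn_exp_neg_mul_cosh_mul_cosh μ hz
  have hbound_int : IntegrableOn
      (fun t ↦ exp (-(z / 2) * cosh t) * (cosh t * cosh (ν * t))) (Ioi 0) := by
    simp only [exp_neg_mul_cosh_mul_cosh_mul_cosh]
    exact ((integrableOn_exp_neg_mul_cosh_mul_cosh _ (half_pos hz)).add
      (integrableOn_exp_neg_mul_cosh_mul_cosh _ (half_pos hz))).div_const 2
  have hbound (t x : ℝ) (hx : x ∈ Ioi (z / 2)) :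
      ‖-(exp (-x * cosh t) * (cosh t * cosh (ν * t)))‖ ≤
        exp (-(z / 2) * cosh t) * (cosh t * cosh (ν * t)) := by
    have hx : z / 2 ≤ x := le_of_lt hx
    rw [norm_neg, norm_of_nonneg (by positivity)]
    gcongr
  have hderiv (t x : ℝ) : HasDerivAt (fun x ↦ exp (-x * cosh t) * cosh (ν * t))
      (-(exp (-x * cosh t) * (cosh t * cosh (ν * t)))) x := by
    refine (((hasDerivAt_neg' x).mul_const (cosh t)).exp.mul_const (cosh (ν * t))).congr_deriv ?_
    ring
  have hint_deriv := (hasDerivAt_integral_of_dominated_loc_of_deriv_le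
    (μ := volume.restrict (Ioi 0)) (F := fun x t ↦ exp (-x * cosh t) * cosh (ν * t))
    (Ioi_mem_nhds (half_lt_self hz)) (.of_forall fun x ↦ by fun_prop) (hint ν) (by fun_prop)
    (.of_forall hbound) hbound_int (.of_forall fun t x _ ↦ hderiv t x)).2
  simp only [exp_neg_mul_cosh_mul_cosh_mul_cosh] at hint_deriv
  rwa [integral_neg, integral_div, integral_add (hint _) (hint _)] at hint_deriv

lemma two_mul_besselK_le (hν : 0 ≤ ν) (hz : 0 < z) :
    2 * ν * besselK ν z ≤ (ν - min ν (1 / 2)) * besselK (ν + 1) z +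
      (ν + min ν (1 / 2)) * besselK (ν - 1) z := by
  have hint (μ c : ℝ) := (integrableOn_exp_neg_mul_cosh_mul_cosh μ hz).const_mul c
  simp only [besselK]
  rw [← integral_const_mul, ← integral_const_mul, ← integral_const_mul,
    ← integral_add (hint _ _) (hint _ _)]
  refine setIntegral_mono_on (hint _ _) ((hint _ _).add (hint _ _)) measurableSet_Ioi fun t ht ↦ ?_
  linarith [mul_le_mul_of_nonneg_left (two_mul_cosh_mul_le hν (le_of_lt ht))
    (exp_nonneg (-z * cosh t))]

lemma min_add_mul_besselK_le (hν : 0 < ν) (hz : 0 < z) :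
    (min ν (1 / 2) + z) * besselK ν z ≤ z * ((besselK (ν + 1) z + besselK (ν - 1) z) / 2) := by
  have hrec := mul_besselK_add_one_sub_besselK_sub_one ν hz
  have hle := mul_le_mul_of_nonneg_left (two_mul_besselK_le hν.le hz) hz.le
  refine le_of_mul_le_mul_left ?_ hν
  linear_combination hle / 2 - min ν (1 / 2) / 2 * hrec

lemma antitoneOn_rpow_mul_besselK {a : ℝ} (hν : 0 < ν) (ha : min ν (1 / 2) < a) :
    AntitoneOn (fun z ↦ z ^ a * besselK ν z) (Ici (a - min ν (1 / 2))) := by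
  have hderiv {x : ℝ} (hx : 0 < x) : HasDerivAt (fun z ↦ z ^ a * besselK ν z)
      (x ^ (a - 1) * (a * besselK ν x - x * ((besselK (ν + 1) x + besselK (ν - 1) x) / 2))) x := by
    refine ((hasDerivAt_rpow_const (Or.inl hx.ne')).fun_mul
      (hasDerivAt_besselK ν hx)).congr_deriv ?_
    rw [rpow_sub_one hx.ne']
    field_simp
    ring
  have hpos {x : ℝ} (hx : x ∈ Ici (a - min ν (1 / 2))) : 0 < x := (sub_pos.2 ha).trans_le hx
  refine antitoneOn_of_hasDerivWithinAt_nonpos (convex_Ici _)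
    (fun x hx ↦ (hderiv (hpos hx)).continuousAt.continuousWithinAt)
    (fun x hx ↦ (hderiv (hpos (interior_subset hx))).hasDerivWithinAt) fun x hx ↦ ?_
  have hx : a - min ν (1 / 2) ≤ x := interior_subset hx
  have hx₀ : 0 < x := hpos hx
  refine mul_nonpos_of_nonneg_of_nonpos (by positivity) (sub_nonpos.2 ?_)
  calc a * besselK ν x ≤ (min ν (1 / 2) + x) * besselK ν x := by
        gcongr
        · exact besselK_nonneg ν x
        · linarith
    _ ≤ _ := min_add_mul_besselK_le hν hx₀

lemma rpow_mul_besselK_le_two_rpow_mul_Gamma (hν : 0 < ν) (hz : 0 < z) :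
    z ^ ν * besselK ν z ≤ 2 ^ (ν - 1) * Gamma ν := by
  have hK : 2 * besselK ν z ≤ (2 / z) ^ ν * Gamma ν := by
    rw [← integral_exp_sub_mul_cosh ν hz, ← one_div_div,
      ← integral_exp_sub_mul_exp hν (half_pos hz)]
    exact integral_mono (integrable_exp_sub_mul_cosh ν hz)
      (integrable_exp_sub_mul_exp hν (half_pos hz))
      fun t ↦ exp_le_exp.2 (sub_mul_cosh_le_sub_mul_exp hz.le ν t)
  calc z ^ ν * besselK ν z = z ^ ν * (2 * besselK ν z) / 2 := by ring
    _ ≤ z ^ ν * ((2 / z) ^ ν * Gamma ν) / 2 := by gcongr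
    _ = 2 ^ (ν - 1) * Gamma ν := by
        rw [div_rpow zero_le_two hz.le, rpow_sub_one two_ne_zero]
        field_simp

lemma rpow_add_mul_besselK_le (r : ℝ) (hν : 0 < ν) (hz : 0 < z) :
    z ^ (ν + r) * besselK ν z ≤ z ^ r * 2 ^ (ν - 1) * Gamma ν := by
  rw [add_comm, rpow_add hz, mul_assoc, mul_assoc]
  exact mul_le_mul_of_nonneg_left (rpow_mul_besselK_le_two_rpow_mul_Gamma hν hz) (by positivity)

end BesselK

theorem rpow_mul_besselK_le_general
    (ν r : ℝ) (hν : 0 < ν) (hr : 0 ≤ r) (z : ℝ) (hz : 0 < z) :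
    z ^ (ν + r) * besselK ν z ≤
      (ν + r - min ν (1 / 2)) ^ r * (2 : ℝ) ^ (ν - 1) * Gamma ν := by
  rcases hr.eq_or_lt with rfl | hr
  · simpa using rpow_mul_besselK_le_two_rpow_mul_Gamma hν hz
  have hmin : min ν (1 / 2) < ν + r := (min_le_left _ _).trans_lt (lt_add_of_pos_right ν hr)
  rcases le_total z (ν + r - min ν (1 / 2)) with h | h
  · refine (rpow_add_mul_besselK_le r hν hz).trans ?_
    have : 0 < Gamma ν := Gamma_pos_of_pos hν
    gcongr
  · exact (antitoneOn_rpow_mul_besselK hν hmin self_mem_Ici h h).trans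
      (rpow_add_mul_besselK_le r hν (sub_pos.2 hmin))

/-- Uniform bound `z^{ν+r} K_ν(z) ≤ (ν + r − ν₀)^r · 2^{ν−1} Γ(ν)`. -/
theorem rpow_mul_besselK_le
    (ν r : ℝ) (hν : 0 < ν) (hr : r ∈ Set.Icc (0:ℝ) 1) (z : ℝ) (hz : 0 < z) :
    z ^ (ν + r) * besselK ν z ≤
      (ν + r - min ν (1/2)) ^ r * (2 : ℝ) ^ (ν - 1) * Real.Gamma ν :=
  rpow_mul_besselK_le_general ν r hν hr.1 z hz
end

section
/- Let s ∈ (0,1), r ∈ [0,1], and set ψ_s(z) = (2^{1−s}/Γ(s)) z^s K_s(z) for z > 0. There exists a constant c > 0 depending only on s such that for every z > 0 and every n ∈ ℕ with n ≥ 1, it holds |z^n ψ_s^{(n)}(z)| ≤ c · 8^n · n! · z^{2s−r}, where ψ_s^{(n)} denotes the n-th derivative of ψ_s. -/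
/-- `ψ_s(z) = (2^{1−s}/Γ(s)) z^s K_s(z)`. -/
noncomputable def psi (s z : ℝ) : ℝ :=
  (2 ^ (1 - s) / Real.Gamma s) * z ^ s * besselK s z

/-!
On the half-plane `0 < re w` the function `w ^ s K_s(w)` is holomorphic, and integrating the
`t`-derivative of `exp (-w cosh t) sinh (s t)` over the half-line shows that its derivative is
`-w ^ s K_{s-1}(w)`. Since `cosh t ≥ exp t / 2`, the integral for `K_{s-1}` is dominated by a Gamma
integral: `|K_{s-1}(w)| ≤ (2 / re w) ^ a Γ(a)` for every positive `a ≥ |s - 1|`. Cauchy's estimate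
on the circle of radius `z / 2` about `z` then bounds `z ^ n ψ_s⁽ⁿ⁾(z)` by a multiple of
`2 ^ n n! z ^ (1 + s - a)`, and the choice `a = 1 - s + r` produces the exponent `2 s - r`.
-/

open Set MeasureTheory Filter Topology

/-- `f` is continuous and satisfies `|f t| ≤ exp (a t)` on the half-line. The constant in front of
the exponential is `1` so that bounds depend on the exponent alone; this covers the products of
`t ↦ cosh (ν t)` and `t ↦ sinh (ν t)` that occur in the Bessel integrals. -/
structure ExpDominated (a : ℝ) (f : ℝ → ℝ) : Prop where
  continuous : Continuous f
  abs_le : ∀ t, 0 ≤ t → |f t| ≤ Real.exp (a * t)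

/-- The transform `f ↦ ∫₀^∞ exp(−w cosh t) f(t) dt` on the half-plane `0 < re w`. -/
noncomputable def coshTransform (f : ℝ → ℝ) (w : ℂ) : ℂ :=
  ∫ t in Ioi (0 : ℝ), Complex.exp (-w * (Real.cosh t : ℂ)) * (f t : ℂ)

/-- The extension of `besselK ν` to the half-plane `0 < re w`, on which Cauchy's estimates apply. -/
noncomputable def besselC (ν : ℝ) : ℂ → ℂ :=
  coshTransform fun t => Real.cosh (ν * t)

lemma cosh_le_exp_abs (x : ℝ) : Real.cosh x ≤ Real.exp |x| := by
  rw [← Real.cosh_abs, Real.cosh_eq]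
  have : Real.exp (-|x|) ≤ Real.exp |x| := Real.exp_le_exp.2 (by linarith [abs_nonneg x])
  linarith

lemma abs_sinh_le_exp_abs (x : ℝ) : |Real.sinh x| ≤ Real.exp |x| := by
  rw [Real.abs_sinh]
  exact (Real.sinh_lt_cosh _).le.trans ((cosh_le_exp_abs _).trans_eq (by rw [abs_abs]))

lemma half_exp_le_cosh (t : ℝ) : Real.exp t / 2 ≤ Real.cosh t := by
  rw [Real.cosh_eq]
  linarith [Real.exp_pos (-t)]

namespace ExpDominated

variable {a b : ℝ} {f g : ℝ → ℝ}

lemma mono (hf : ExpDominated a f) (hab : a ≤ b) : ExpDominated b f where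
  continuous := hf.continuous
  abs_le t ht := (hf.abs_le t ht).trans (by gcongr)

lemma mul (hf : ExpDominated a f) (hg : ExpDominated b g) :
    ExpDominated (a + b) fun t => f t * g t where
  continuous := hf.continuous.mul hg.continuous
  abs_le t ht := by
    rw [abs_mul, add_mul, Real.exp_add]
    gcongr
    exacts [hf.abs_le t ht, hg.abs_le t ht]

end ExpDominated

lemma expDominated_cosh_mul (ν : ℝ) : ExpDominated |ν| fun t => Real.cosh (ν * t) where
  continuous := by fun_prop
  abs_le t ht := by
    simpa only [abs_mul, abs_of_nonneg ht, abs_of_pos (Real.cosh_pos _)] using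
      cosh_le_exp_abs (ν * t)

lemma expDominated_sinh_mul (ν : ℝ) : ExpDominated |ν| fun t => Real.sinh (ν * t) where
  continuous := by fun_prop
  abs_le t ht := by
    simpa only [abs_mul, abs_of_nonneg ht] using abs_sinh_le_exp_abs (ν * t)

lemma expDominated_cosh : ExpDominated 1 Real.cosh := by
  simpa using expDominated_cosh_mul 1

lemma expDominated_sinh : ExpDominated 1 Real.sinh := by
  simpa using expDominated_sinh_mul 1

section Kernel

variable {a b x : ℝ}

lemma exp_smul_gamma_integrand_comp_exp (a b t : ℝ) :
    Real.exp t • (Real.exp t ^ (a - 1) * Real.exp (-(b * Real.exp t))) =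
      Real.exp (-b * Real.exp t) * Real.exp (a * t) := by
  rw [smul_eq_mul, ← Real.exp_mul, ← Real.exp_add, ← Real.exp_add, ← Real.exp_add]
  ring_nf

lemma integrableOn_rpow_mul_exp_neg_mul_Ioi (ha : 0 < a) (hb : 0 < b) :
    IntegrableOn (fun u : ℝ => u ^ (a - 1) * Real.exp (-(b * u))) (Ioi 0) := by
  simpa using integrableOn_rpow_mul_exp_neg_mul_rpow (p := 1) (s := a - 1) (by linarith)
    one_pos hb

lemma integrableOn_exp_neg_mul_exp_mul_exp (ha : 0 < a) (hb : 0 < b) :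
    IntegrableOn (fun t : ℝ => Real.exp (-b * Real.exp t) * Real.exp (a * t)) (Ioi 0) := by
  simp only [← exp_smul_gamma_integrand_comp_exp]
  refine (integrableOn_comp_exp_Ioi
    (fun u : ℝ => u ^ (a - 1) * Real.exp (-(b * u))) 0).2 ?_
  exact (integrableOn_rpow_mul_exp_neg_mul_Ioi ha hb).mono_set
    (Ioi_subset_Ioi (Real.exp_pos 0).le)

lemma setIntegral_exp_neg_mul_exp_mul_exp_le (ha : 0 < a) (hb : 0 < b) :
    ∫ t in Ioi (0 : ℝ), Real.exp (-b * Real.exp t) * Real.exp (a * t) ≤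
      (1 / b) ^ a * Real.Gamma a := by
  simp only [← exp_smul_gamma_integrand_comp_exp]
  rw [integral_comp_exp_Ioi (fun u : ℝ => u ^ (a - 1) * Real.exp (-(b * u))),
    ← Real.integral_rpow_mul_exp_neg_mul_Ioi ha hb]
  refine setIntegral_mono_set (integrableOn_rpow_mul_exp_neg_mul_Ioi ha hb) ?_
    (Ioi_subset_Ioi (Real.exp_pos 0).le).eventuallyLE
  filter_upwards [ae_restrict_mem measurableSet_Ioi] with u (hu : 0 < u)
  positivity

lemma exp_neg_mul_cosh_le (hx : 0 ≤ x) (t : ℝ) :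
    Real.exp (-x * Real.cosh t) ≤ Real.exp (-(x / 2) * Real.exp t) :=
  Real.exp_le_exp.2 (by nlinarith [half_exp_le_cosh t])

lemma integrableOn_exp_neg_mul_cosh_mul_exp (a : ℝ) (hx : 0 < x) :
    IntegrableOn (fun t : ℝ => Real.exp (-x * Real.cosh t) * Real.exp (a * t)) (Ioi 0) := by
  refine Integrable.mono' (integrableOn_exp_neg_mul_exp_mul_exp (a := max a 1) (by positivity)
    (half_pos hx)) (Continuous.aestronglyMeasurable (by fun_prop)) ?_
  filter_upwards [ae_restrict_mem measurableSet_Ioi] with t (ht : 0 < t)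
  rw [Real.norm_of_nonneg (by positivity)]
  gcongr ?_ * Real.exp (?_ * t)
  exacts [exp_neg_mul_cosh_le hx.le t, le_max_left a 1]

lemma setIntegral_exp_neg_mul_cosh_mul_exp_le (ha : 0 < a) (hx : 0 < x) :
    ∫ t in Ioi (0 : ℝ), Real.exp (-x * Real.cosh t) * Real.exp (a * t) ≤
      (2 / x) ^ a * Real.Gamma a := by
  rw [← one_div_div x 2]
  refine le_trans ?_ (setIntegral_exp_neg_mul_exp_mul_exp_le ha (half_pos hx))
  refine setIntegral_mono (integrableOn_exp_neg_mul_cosh_mul_exp a hx)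
    (integrableOn_exp_neg_mul_exp_mul_exp ha (half_pos hx)) fun t => ?_
  gcongr ?_ * _
  exact exp_neg_mul_cosh_le hx.le t

end Kernel

section CoshTransform

variable {a b x : ℝ} {f f' g : ℝ → ℝ} {w : ℂ}

lemma ExpDominated.norm_integrand_le (hf : ExpDominated a f) (hw : x ≤ w.re) {t : ℝ}
    (ht : 0 ≤ t) :
    ‖Complex.exp (-w * (Real.cosh t : ℂ)) * (f t : ℂ)‖ ≤
      Real.exp (-x * Real.cosh t) * Real.exp (a * t) := by
  rw [norm_mul, Complex.norm_exp, Complex.re_mul_ofReal, Complex.neg_re, Complex.norm_real]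
  have := (Real.cosh_pos t).le
  gcongr
  exact hf.abs_le t ht

lemma ExpDominated.integrableOn (hf : ExpDominated a f) (hw : 0 < w.re) :
    IntegrableOn (fun t : ℝ => Complex.exp (-w * (Real.cosh t : ℂ)) * (f t : ℂ)) (Ioi 0) := by
  have := hf.continuous
  refine Integrable.mono' (integrableOn_exp_neg_mul_cosh_mul_exp a hw)
    (Continuous.aestronglyMeasurable (by fun_prop)) ?_
  filter_upwards [ae_restrict_mem measurableSet_Ioi] with t ht
  exact hf.norm_integrand_le le_rfl ht.le

lemma ExpDominated.norm_coshTransform_le (hf : ExpDominated a f) (ha : 0 < a) (hx : 0 < x)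
    (hw : x ≤ w.re) : ‖coshTransform f w‖ ≤ (2 / x) ^ a * Real.Gamma a := by
  refine le_trans ?_ (setIntegral_exp_neg_mul_cosh_mul_exp_le ha hx)
  refine norm_integral_le_of_norm_le (integrableOn_exp_neg_mul_cosh_mul_exp a hx) ?_
  filter_upwards [ae_restrict_mem measurableSet_Ioi] with t ht
  exact hf.norm_integrand_le hw ht.le

lemma coshTransform_const_mul (c : ℝ) (f : ℝ → ℝ) (w : ℂ) :
    coshTransform (fun t => c * f t) w = c * coshTransform f w := by
  simp only [coshTransform, ← integral_const_mul, Complex.ofReal_mul, mul_left_comm]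

lemma ExpDominated.coshTransform_sub (hf : ExpDominated a f) (hg : ExpDominated b g)
    (hw : 0 < w.re) :
    coshTransform (fun t => f t - g t) w = coshTransform f w - coshTransform g w := by
  simp only [coshTransform, ← integral_sub (hf.integrableOn hw) (hg.integrableOn hw),
    Complex.ofReal_sub, mul_sub]

lemma ExpDominated.hasDerivAt_coshTransform (hf : ExpDominated a f) (hw : 0 < w.re) :
    HasDerivAt (coshTransform f) (-coshTransform (fun t => Real.cosh t * f t) w) w := by
  have hcf := expDominated_cosh.mul hf
  have hf_cont := hf.continuous
  have hnhds : {v : ℂ | w.re / 2 < v.re} ∈ 𝓝 w :=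
    (isOpen_lt continuous_const Complex.continuous_re).mem_nhds (half_lt_self hw)
  rw [coshTransform, ← integral_neg]
  refine (hasDerivAt_integral_of_dominated_loc_of_deriv_le
    (F := fun (v : ℂ) (t : ℝ) => Complex.exp (-v * (Real.cosh t : ℂ)) * (f t : ℂ))
    (F' := fun (v : ℂ) (t : ℝ) =>
      -(Complex.exp (-v * (Real.cosh t : ℂ)) * ((Real.cosh t * f t : ℝ) : ℂ)))
    hnhds (.of_forall fun v => Continuous.aestronglyMeasurable (by fun_prop))
    (hf.integrableOn hw) (hcf.integrableOn hw).neg.aestronglyMeasurable ?_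
    (integrableOn_exp_neg_mul_cosh_mul_exp (1 + a) (half_pos hw)) ?_).2
  · filter_upwards [ae_restrict_mem measurableSet_Ioi] with t ht v hv
    rw [norm_neg]
    exact hcf.norm_integrand_le (le_of_lt hv) (le_of_lt ht)
  · refine ae_of_all _ fun t v _ => ?_
    have hexp := ((hasDerivAt_neg v).mul_const (Real.cosh t : ℂ)).cexp.mul_const (f t : ℂ)
    exact hexp.congr_deriv (by push_cast; ring)

lemma ExpDominated.mul_coshTransform_sinh_mul (hf : ExpDominated a f)
    (hderiv : ∀ t, 0 ≤ t → HasDerivAt f (f' t) t)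
    (hf' : IntegrableOn (fun t : ℝ => Complex.exp (-w * (Real.cosh t : ℂ)) * (f' t : ℂ)) (Ioi 0))
    (hw : 0 < w.re) :
    w * coshTransform (fun t => Real.sinh t * f t) w =
      Complex.exp (-w) * f 0 + coshTransform f' w := by
  have hsf := ((expDominated_sinh.mul hf).integrableOn hw).const_mul w
  have hprod (t : ℝ) (ht : 0 ≤ t) :
      HasDerivAt (fun t : ℝ => Complex.exp (-w * (Real.cosh t : ℂ)) * (f t : ℂ))
        (Complex.exp (-w * (Real.cosh t : ℂ)) * (f' t : ℂ) -
          w * (Complex.exp (-w * (Real.cosh t : ℂ)) * ((Real.sinh t * f t : ℝ) : ℂ))) t := by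
    have hexp := ((Real.hasDerivAt_cosh t).ofReal_comp.const_mul (-w)).cexp
    exact (hexp.mul (hderiv t ht).ofReal_comp).congr_deriv (by push_cast; ring)
  have hlim := tendsto_zero_of_hasDerivAt_of_integrableOn_Ioi (fun t ht => hprod t (le_of_lt ht))
    (hf'.sub hsf) (hf.integrableOn hw)
  have hFTC := integral_Ioi_of_hasDerivAt_of_tendsto' hprod (hf'.sub hsf) hlim
  rw [integral_sub hf' hsf, integral_const_mul, Real.cosh_zero, Complex.ofReal_one, mul_one]
    at hFTC
  simp only [coshTransform]
  linear_combination -hFTC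

end CoshTransform

section BesselC

variable {a s z ν : ℝ} {w : ℂ}

lemma besselC_ofReal (ν x : ℝ) : besselC ν (x : ℂ) = (besselK ν x : ℂ) := by
  rw [besselC, coshTransform, besselK, ← integral_complex_ofReal]
  push_cast
  rfl

lemma norm_besselC_le {x : ℝ} (hνa : |ν| ≤ a) (ha : 0 < a) (hx : 0 < x) (hw : x ≤ w.re) :
    ‖besselC ν w‖ ≤ (2 / x) ^ a * Real.Gamma a :=
  ((expDominated_cosh_mul ν).mono hνa).norm_coshTransform_le ha hx hw

lemma differentiableAt_besselC (ν : ℝ) (hw : 0 < w.re) : DifferentiableAt ℂ (besselC ν) w :=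
  ((expDominated_cosh_mul ν).hasDerivAt_coshTransform hw).differentiableAt

lemma mul_coshTransform_sinh_mul_sinh (s : ℝ) (hw : 0 < w.re) :
    w * coshTransform (fun t => Real.sinh t * Real.sinh (s * t)) w = s * besselC s w := by
  have hderiv (t : ℝ) (_ : 0 ≤ t) :
      HasDerivAt (fun t => Real.sinh (s * t)) (s * Real.cosh (s * t)) t := by
    simpa [mul_comm] using ((hasDerivAt_id t).const_mul s).sinh
  have hint : IntegrableOn (fun t : ℝ => Complex.exp (-w * (Real.cosh t : ℂ)) *
      ((s * Real.cosh (s * t) : ℝ) : ℂ)) (Ioi 0) := by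
    simpa only [IntegrableOn, Complex.ofReal_mul, mul_left_comm] using
      ((expDominated_cosh_mul s).integrableOn hw).const_mul (s : ℂ)
  rw [(expDominated_sinh_mul s).mul_coshTransform_sinh_mul hderiv hint hw,
    coshTransform_const_mul, besselC]
  simp

lemma besselC_sub_one (s : ℝ) (hw : 0 < w.re) :
    besselC (s - 1) w = coshTransform (fun t => Real.cosh t * Real.cosh (s * t)) w -
      coshTransform (fun t => Real.sinh t * Real.sinh (s * t)) w := by
  rw [← (expDominated_cosh.mul (expDominated_cosh_mul s)).coshTransform_sub
    (expDominated_sinh.mul (expDominated_sinh_mul s)) hw, besselC]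
  congr 1
  funext t
  rw [sub_mul, one_mul, Real.cosh_sub]
  ring

lemma hasDerivAt_cpow_mul_besselC (s : ℝ) (hw : 0 < w.re) :
    HasDerivAt (fun v : ℂ => v ^ (s : ℂ) * besselC s v)
      (-(w ^ (s : ℂ) * besselC (s - 1) w)) w := by
  have hw0 : w ≠ 0 := by
    rintro rfl
    simp at hw
  have hpow : HasDerivAt (fun v : ℂ => v ^ (s : ℂ)) (s * w ^ ((s : ℂ) - 1)) w := by
    simpa using (hasDerivAt_id w).cpow_const (c := (s : ℂ)) (Or.inl hw)
  refine (hpow.mul ((expDominated_cosh_mul s).hasDerivAt_coshTransform hw)).congr_deriv ?_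
  have hparts := mul_coshTransform_sinh_mul_sinh s hw
  rw [besselC] at hparts
  rw [besselC_sub_one s hw, Complex.cpow_sub _ _ hw0, Complex.cpow_one]
  field_simp
  linear_combination -w ^ (s : ℂ) * hparts

lemma differentiableOn_cpow_mul_besselC (s ν : ℝ) :
    DifferentiableOn ℂ (fun v : ℂ => v ^ (s : ℂ) * besselC ν v) {v | 0 < v.re} := fun _ hw =>
  ((differentiableAt_id.cpow_const (Or.inl hw)).mul
    (differentiableAt_besselC ν hw)).differentiableWithinAt

lemma half_le_re_of_mem_closedBall (hw : w ∈ Metric.closedBall (z : ℂ) (z / 2)) :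
    z / 2 ≤ w.re := by
  have h := (Complex.abs_re_le_norm (w - z)).trans (mem_closedBall_iff_norm.1 hw)
  rw [Complex.sub_re, Complex.ofReal_re] at h
  linarith [(abs_le.1 h).1]

lemma rpow_le_two_rpow_abs_mul_rpow {u : ℝ} (s : ℝ) (hz : 0 < z) (hzu : z / 2 ≤ u)
    (huz : u ≤ 2 * z) : u ^ s ≤ 2 ^ |s| * z ^ s := by
  rcases le_total 0 s with hs | hs
  · rw [abs_of_nonneg hs, ← Real.mul_rpow two_pos.le hz.le]
    exact Real.rpow_le_rpow (by linarith) huz hs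
  · rw [abs_of_nonpos hs, Real.rpow_neg two_pos.le, ← div_eq_inv_mul,
      ← Real.div_rpow hz.le two_pos.le]
    exact Real.rpow_le_rpow_of_nonpos (half_pos hz) hzu hs

lemma norm_cpow_mul_besselC_le (s : ℝ) (hνa : |ν| ≤ a) (ha : 0 < a) (hz : 0 < z)
    (hw : w ∈ Metric.closedBall (z : ℂ) (z / 2)) :
    ‖w ^ (s : ℂ) * besselC ν w‖ ≤ 2 ^ |s| * z ^ s * ((4 / z) ^ a * Real.Gamma a) := by
  have hre := half_le_re_of_mem_closedBall hw
  have hnorm : ‖w‖ ≤ 2 * z := by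
    have h := norm_le_of_mem_closedBall hw
    rw [Complex.norm_real, Real.norm_of_nonneg hz.le] at h
    linarith
  have hK := norm_besselC_le hνa ha (half_pos hz) hre
  rw [show 2 / (z / 2) = 4 / z by field_simp; norm_num] at hK
  rw [norm_mul, Complex.norm_cpow_real]
  gcongr
  exact rpow_le_two_rpow_abs_mul_rpow s hz (hre.trans (Complex.re_le_norm w)) hnorm

lemma norm_iteratedDeriv_cpow_mul_besselC_le (s : ℝ) (hνa : |ν| ≤ a) (ha : 0 < a) (hz : 0 < z)
    (m : ℕ) :
    ‖iteratedDeriv m (fun v : ℂ => v ^ (s : ℂ) * besselC ν v) z‖ ≤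
      m.factorial * (2 ^ |s| * z ^ s * ((4 / z) ^ a * Real.Gamma a)) / (z / 2) ^ m := by
  refine Complex.norm_iteratedDeriv_le_of_forall_mem_sphere_norm_le m (half_pos hz) ?_ fun w hw =>
    norm_cpow_mul_besselC_le s hνa ha hz (Metric.sphere_subset_closedBall hw)
  refine ((differentiableOn_cpow_mul_besselC s ν).mono fun w hw => ?_).diffContOnCl
  exact (half_pos hz).trans_le
    (half_le_re_of_mem_closedBall (Metric.closure_ball_subset_closedBall hw))

end BesselC

lemma iteratedDeriv_re_comp_ofReal {F : ℂ → ℂ} {x : ℝ} (hF : AnalyticAt ℂ F x) (n : ℕ) :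
    iteratedDeriv n (fun y : ℝ => (F y).re) x = (iteratedDeriv n F x).re := by
  induction n generalizing x with
  | zero => simp
  | succ n ih =>
    have hnear : iteratedDeriv n (fun y : ℝ => (F y).re) =ᶠ[𝓝 x]
        fun y : ℝ => (iteratedDeriv n F y).re :=
      (Complex.continuous_ofReal.continuousAt.eventually hF.eventually_analyticAt).mono
        fun _ hy => ih hy
    have hdiff : DifferentiableAt ℂ (iteratedDeriv n F) x := by
      rw [iteratedDeriv_eq_iterate]
      exact (hF.iterated_deriv n).differentiableAt
    rw [iteratedDeriv_succ, iteratedDeriv_succ, hnear.deriv_eq]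
    exact hdiff.hasDerivAt.real_of_complex.deriv

section Psi

variable {s z : ℝ}

lemma psi_eqOn_re (s : ℝ) :
    EqOn (psi s) (fun x : ℝ => 2 ^ (1 - s) / Real.Gamma s *
      ((x : ℂ) ^ (s : ℂ) * besselC s x).re) (Ioi 0) := fun x hx => by
  dsimp only
  rw [psi, besselC_ofReal, ← Complex.ofReal_cpow (le_of_lt hx), ← Complex.ofReal_mul,
    Complex.ofReal_re, mul_assoc]

lemma iteratedDerivWithin_succ_psi (s : ℝ) (hz : 0 < z) (m : ℕ) :
    iteratedDerivWithin (m + 1) (psi s) (Ioi 0) z = -(2 ^ (1 - s) / Real.Gamma s *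
      (iteratedDeriv m (fun w : ℂ => w ^ (s : ℂ) * besselC (s - 1) w) z).re) := by
  have hnhds : {w : ℂ | 0 < w.re} ∈ 𝓝 (z : ℂ) :=
    (isOpen_lt continuous_const Complex.continuous_re).mem_nhds hz
  have hderiv : deriv (fun w : ℂ => w ^ (s : ℂ) * besselC s w) =ᶠ[𝓝 (z : ℂ)]
      fun w => -(w ^ (s : ℂ) * besselC (s - 1) w) :=
    mem_of_superset hnhds fun _ hw => (hasDerivAt_cpow_mul_besselC s hw).deriv
  rw [iteratedDerivWithin_congr (psi_eqOn_re s) hz,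
    iteratedDerivWithin_const_mul_field, iteratedDerivWithin_of_isOpen isOpen_Ioi hz,
    iteratedDeriv_re_comp_ofReal ((differentiableOn_cpow_mul_besselC s s).analyticAt hnhds),
    iteratedDeriv_succ', hderiv.iteratedDeriv_eq, iteratedDeriv_fun_neg, Complex.neg_re, mul_neg]

theorem abs_pow_mul_iteratedDerivWithin_succ_psi_le {a : ℝ} (hsa : |s - 1| ≤ a) (ha : 0 < a)
    (hz : 0 < z) (m : ℕ) :
    |z ^ (m + 1) * iteratedDerivWithin (m + 1) (psi s) (Ioi 0) z| ≤
      |2 ^ (1 - s) / Real.Gamma s| * 2 ^ |s| * (4 ^ a * Real.Gamma a) * 2 ^ m * m.factorial *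
        z ^ (1 + s - a) := by
  rw [iteratedDerivWithin_succ_psi s hz, abs_mul, abs_neg, abs_mul, abs_of_pos (pow_pos hz _)]
  set c := |2 ^ (1 - s) / Real.Gamma s|
  have hcauchy := (Complex.abs_re_le_norm _).trans
    (norm_iteratedDeriv_cpow_mul_besselC_le s hsa ha hz m)
  calc
    _ ≤ z ^ (m + 1) * (c * (m.factorial * (2 ^ |s| * z ^ s * ((4 / z) ^ a * Real.Gamma a)) /
          (z / 2) ^ m)) := by gcongr
    _ = _ := by
      rw [Real.div_rpow (by norm_num) hz.le, Real.rpow_sub hz, Real.rpow_add hz, Real.rpow_one,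
        div_pow, pow_succ]
      field_simp

lemma continuousOn_const_rpow_mul_Gamma {b : ℝ} (hb : b ≠ 0) :
    ContinuousOn (fun a : ℝ => b ^ a * Real.Gamma a) (Ioi 0) :=
  (Real.continuous_const_rpow hb).continuousOn.mul
    Real.differentiableOn_Gamma_Ioi.continuousOn

/-- At the poles `s = 0, -1, -2, …` of `Γ` the value `Real.Gamma s = 0` makes `psi s` vanish, as it
should: `1 / Γ` is entire with zeros there. -/
theorem psi_deriv_bound_general (hs : s < 1) (R : ℝ) :
    ∃ c > 0, ∀ r ∈ Icc 0 R, ∀ z : ℝ, 0 < z → ∀ n : ℕ, 1 ≤ n →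
      |z ^ n * iteratedDerivWithin n (psi s) (Ioi 0) z| ≤
        c * 8 ^ n * (n.factorial : ℝ) * z ^ (2 * s - r) := by
  obtain ⟨M, hM⟩ := (isCompact_Icc (a := 1 - s) (b := 1 - s + R)).exists_bound_of_continuousOn
    ((continuousOn_const_rpow_mul_Gamma (b := 4) four_ne_zero).mono fun a ha =>
      (sub_pos.2 hs).trans_le ha.1)
  set C := |2 ^ (1 - s) / Real.Gamma s| * 2 ^ |s|
  refine ⟨max (C * M) 1, by positivity, fun r ⟨hr0, hrR⟩ z hz n hn => ?_⟩
  obtain ⟨m, rfl⟩ := Nat.exists_eq_add_of_le' hn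
  have hsr : |s - 1| ≤ 1 - s + r := abs_le.2 ⟨by linarith, by linarith⟩
  have hconst : C * (4 ^ (1 - s + r) * Real.Gamma (1 - s + r)) ≤ max (C * M) 1 :=
    le_max_of_le_left (mul_le_mul_of_nonneg_left
      (le_of_abs_le (hM _ ⟨by linarith, by linarith⟩)) (by positivity))
  have hpow : (2 : ℝ) ^ m ≤ 8 ^ (m + 1) :=
    (pow_le_pow_left₀ two_pos.le (by norm_num) m).trans
      (pow_le_pow_right₀ (by norm_num) m.le_succ)
  calc
    _ ≤ _ := abs_pow_mul_iteratedDerivWithin_succ_psi_le hsr (by linarith) hz m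
    _ ≤ max (C * M) 1 * 8 ^ (m + 1) * ((m + 1).factorial : ℝ) * z ^ (1 + s - (1 - s + r)) := by
      gcongr
      exact m.le_succ
    _ = _ := by ring_nf

end Psi

/-- Bound `|z^n ψ_s^{(n)}(z)| ≤ c 8^n n! z^{2s−r}` with `c` depending
only on `s`. -/
theorem psi_deriv_bound (s : ℝ) (hs : s ∈ Set.Ioo (0:ℝ) 1) :
    ∃ c > 0, ∀ r ∈ Set.Icc (0:ℝ) 1, ∀ z : ℝ, 0 < z → ∀ n : ℕ, 1 ≤ n →
      |z ^ n * iteratedDerivWithin n (psi s) (Set.Ioi (0:ℝ)) z| ≤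
        c * 8 ^ n * (n.factorial : ℝ) * z ^ (2 * s - r) :=
  psi_deriv_bound_general hs.2 1
end
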